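/- Fix integers N, d ≥ 2. Then lim_{p→∞} (F_{p,N,d})^{1/p} = F_{∞,N,d}, where F_{p,N,d} is the minimum of the p-frame potential over S(N,d) and F_{∞,N,d} is the minimum coherence over S(N,d). -/

import Mathlib

open scoped RealInnerProductSpace
open Real

/-- The `p`-frame potential `FP_{p,N,d}(X) = Σ_{k≠ℓ} |⟨x_k,x_ℓ⟩|^p`. -/
noncomputable def framePotential (d N : ℕ) (p : ℝ)
    (X : Fin N → EuclideanSpace ℝ (Fin d)) : ℝ :=
  ∑ k : Fin N, ∑ l : Fin N, if k ≠ l then |⟪X k, X l⟫| ^ p else 0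

/-- `F_{p,N,d}`, the minimum of the `p`-frame potential over `S(N,d)`. -/
noncomputable def minFramePotential (d N : ℕ) (p : ℝ) : ℝ :=
  sInf (framePotential d N p '' {X | ∀ i, ‖X i‖ = 1})

/-- The coherence `c(X) = max_{k≠ℓ} |⟨x_k,x_ℓ⟩|`. -/
noncomputable def coherence (d N : ℕ) (X : Fin N → EuclideanSpace ℝ (Fin d)) : ℝ :=
  sSup {v | ∃ k l : Fin N, k ≠ l ∧ v = |⟪X k, X l⟫|}

/-- `F_{∞,N,d}`, the minimal coherence over `S(N,d)`. -/
noncomputable def minCoherence (d N : ℕ) : ℝ :=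
  sInf (coherence d N '' {X | ∀ i, ‖X i‖ = 1})

lemma aux_bddAbove (d N : ℕ) (X : Fin N → EuclideanSpace ℝ (Fin d)) :
    BddAbove {v | ∃ k l : Fin N, k ≠ l ∧ v = |⟪X k, X l⟫|} := by
  refine ((Set.finite_range (fun q : Fin N × Fin N => |⟪X q.1, X q.2⟫|)).subset ?_).bddAbove
  rintro v ⟨k, l, _, rfl⟩
  exact ⟨(k, l), rfl⟩

lemma aux_le_coherence (d N : ℕ) (X : Fin N → EuclideanSpace ℝ (Fin d)) (k l : Fin N)
    (h : k ≠ l) : |⟪X k, X l⟫| ≤ coherence d N X :=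
  le_csSup (aux_bddAbove d N X) ⟨k, l, h, rfl⟩

lemma aux_coherence_nonneg (d N : ℕ) (X : Fin N → EuclideanSpace ℝ (Fin d)) :
    0 ≤ coherence d N X := by
  apply Real.sSup_nonneg
  rintro v ⟨k, l, _, rfl⟩
  exact abs_nonneg _

lemma aux_fp_nonneg (d N : ℕ) (p : ℝ) (X : Fin N → EuclideanSpace ℝ (Fin d)) :
    0 ≤ framePotential d N p X := by
  unfold framePotential
  refine Finset.sum_nonneg fun k _ => Finset.sum_nonneg fun l _ => ?_
  split_ifs
  · positivity
  · exact le_rfl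

lemma aux_term_le (d N : ℕ) (p : ℝ) (X : Fin N → EuclideanSpace ℝ (Fin d)) (k l : Fin N)
    (h : k ≠ l) : |⟪X k, X l⟫| ^ p ≤ framePotential d N p X := by
  have h0 : ∀ k l : Fin N, 0 ≤ (if k ≠ l then |⟪X k, X l⟫| ^ p else 0) := by
    intro k l
    split_ifs
    · positivity
    · exact le_rfl
  unfold framePotential
  calc |⟪X k, X l⟫| ^ p = (if k ≠ l then |⟪X k, X l⟫| ^ p else 0) := by rw [if_pos h]
    _ ≤ ∑ l : Fin N, (if k ≠ l then |⟪X k, X l⟫| ^ p else 0) :=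
      Finset.single_le_sum (f := fun l => if k ≠ l then |⟪X k, X l⟫| ^ p else 0)
        (fun l _ => h0 k l) (Finset.mem_univ l)
    _ ≤ _ := Finset.single_le_sum
        (f := fun k => ∑ l : Fin N, (if k ≠ l then |⟪X k, X l⟫| ^ p else 0))
        (fun k _ => Finset.sum_nonneg fun l _ => h0 k l) (Finset.mem_univ k)

lemma aux_coherence_le (d N : ℕ) (hN : 2 ≤ N) (p : ℝ) (hp : 0 < p)
    (X : Fin N → EuclideanSpace ℝ (Fin d)) :
    coherence d N X ≤ framePotential d N p X ^ (1 / p) := by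
  refine csSup_le ⟨_, ⟨0, by omega⟩, ⟨1, by omega⟩, by simp, rfl⟩ ?_
  rintro v ⟨k, l, h, rfl⟩
  rw [one_div, Real.le_rpow_inv_iff_of_pos (abs_nonneg _) (aux_fp_nonneg d N p X) hp]
  exact aux_term_le d N p X k l h

lemma aux_fp_le (d N : ℕ) (p : ℝ) (hp : 0 < p)
    (X : Fin N → EuclideanSpace ℝ (Fin d)) :
    framePotential d N p X ≤ (N : ℝ) ^ 2 * coherence d N X ^ p := by
  have hc := aux_coherence_nonneg d N X
  have : framePotential d N p X ≤ ∑ k : Fin N, ∑ l : Fin N, coherence d N X ^ p := by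
    unfold framePotential
    refine Finset.sum_le_sum fun k _ => Finset.sum_le_sum fun l _ => ?_
    split_ifs with h
    · exact Real.rpow_le_rpow (abs_nonneg _) (aux_le_coherence d N X k l h) hp.le
    · positivity
  refine this.trans_eq ?_
  simp
  ring

theorem tendsto_minFramePotential_rpow_inv
    (d N : ℕ) (hd : 2 ≤ d) (hN : 2 ≤ N) :
    Filter.Tendsto (fun p : ℝ => minFramePotential d N p ^ (1 / p))
      Filter.atTop (nhds (minCoherence d N)) := by
  have hne : {X : Fin N → EuclideanSpace ℝ (Fin d) | ∀ i, ‖X i‖ = 1}.Nonempty :=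
    ⟨fun _ => EuclideanSpace.single ⟨0, by omega⟩ 1, fun i => by simp⟩
  have hbc : BddBelow (coherence d N '' {X | ∀ i, ‖X i‖ = 1}) := by
    refine ⟨0, ?_⟩
    rintro _ ⟨X, _, rfl⟩
    exact aux_coherence_nonneg d N X
  have hbf : ∀ p, BddBelow (framePotential d N p '' {X | ∀ i, ‖X i‖ = 1}) := by
    intro p
    refine ⟨0, ?_⟩
    rintro _ ⟨X, _, rfl⟩
    exact aux_fp_nonneg d N p X
  have hm0 : 0 ≤ minCoherence d N := by
    apply Real.sInf_nonneg
    rintro _ ⟨X, _, rfl⟩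
    exact aux_coherence_nonneg d N X
  have hF0 : ∀ p, 0 ≤ minFramePotential d N p := by
    intro p
    apply Real.sInf_nonneg
    rintro _ ⟨X, _, rfl⟩
    exact aux_fp_nonneg d N p X
  have hN0 : (0 : ℝ) < (N : ℝ) ^ 2 := by
    have : (0 : ℝ) < N := by exact_mod_cast (by omega : 0 < N)
    positivity
  have hlim : Filter.Tendsto (fun p : ℝ => ((N : ℝ) ^ 2) ^ (1 / p) * minCoherence d N)
      Filter.atTop (nhds (minCoherence d N)) := by
    have h1 : Filter.Tendsto (fun p : ℝ => 1 / p) Filter.atTop (nhds 0) := by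
      simpa using tendsto_inv_atTop_zero (𝕜 := ℝ)
    have h2 := ((Real.continuousAt_const_rpow (b := 0) hN0.ne').tendsto.comp h1 : Filter.Tendsto
      (fun p : ℝ => ((N : ℝ) ^ 2) ^ (1 / p)) Filter.atTop (nhds (((N : ℝ) ^ 2) ^ (0 : ℝ))))
    simpa using h2.mul_const (minCoherence d N)
  refine tendsto_of_tendsto_of_tendsto_of_le_of_le' tendsto_const_nhds hlim ?_ ?_
  · filter_upwards [Filter.eventually_gt_atTop 0] with p hp
    rw [one_div, Real.le_rpow_inv_iff_of_pos hm0 (hF0 p) hp]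
    refine le_csInf (hne.image _) ?_
    rintro _ ⟨X, hX, rfl⟩
    rw [← Real.le_rpow_inv_iff_of_pos hm0 (aux_fp_nonneg d N p X) hp, ← one_div]
    exact (csInf_le hbc ⟨X, hX, rfl⟩).trans (aux_coherence_le d N hN p hp X)
  · filter_upwards [Filter.eventually_gt_atTop 0] with p hp
    have hA : 0 < ((N : ℝ) ^ 2) ^ (1 / p) := Real.rpow_pos_of_pos hN0 _
    rw [← div_le_iff₀' hA]
    refine le_csInf (hne.image _) ?_
    rintro _ ⟨X, hX, rfl⟩
    have hc := aux_coherence_nonneg d N X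
    rw [div_le_iff₀' hA]
    calc minFramePotential d N p ^ (1 / p)
        ≤ ((N : ℝ) ^ 2 * coherence d N X ^ p) ^ (1 / p) :=
          Real.rpow_le_rpow (hF0 p)
            ((csInf_le (hbf p) ⟨X, hX, rfl⟩).trans (aux_fp_le d N p hp X)) (by positivity)
      _ = ((N : ℝ) ^ 2) ^ (1 / p) * coherence d N X := by
          rw [Real.mul_rpow hN0.le (by positivity), one_div, Real.rpow_rpow_inv hc hp.ne']
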